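/- Let G be a connected block graph, v ∈ V(G), and k an integer with 2 ≤ k ≤ n(G). Let T(v,G) be the spanning tree of G obtained by deleting, from every block B of G, each edge of B not incident with Near_G(v,B). Then every Steiner k-ecc v-tree in T(v,G) is also a Steiner k-ecc v-tree in G; in particular its number of edges equals ecc_k(v,G). -/

import Mathlib

/-! A connected subgraph `H` of the block graph `G` that contains `v` can be replaced by a
connected subgraph of `T(v,G)` on the same vertices with at most as many edges.  Choose for each
`u ≠ v` a *parent*: a neighbour `p` of `u` one step closer to `v`.

* The edge `up` lies in `T(v,G)` (`adj_of_dist`): a block containing it is a clique, so none of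
  its vertices is closer to `v` than `p`, as such a vertex would be too close to the neighbour `u`.
* Every connected `H` containing `u` and `v` contains `p` (`parent_mem`): otherwise `u` is joined
  to the parent `p'` of `p` by a path avoiding `p`, which `p` closes up to a cycle.  A cycle lies
  in a block (`exists_isBlock_of_path`), so `u` and `p'` are adjacent, contradicting
  `d(v,u) = d(v,p') + 2`.

The parent edges of the vertices of `H` other than `v` therefore form a connected subgraph of
`T(v,G)` on the vertices of `H`, with at most `|H| - 1 ≤ m(H)` edges (`exists_sub_T`).
So for each `S ∋ v` the Steiner distances of `S` in `T(v,G)` and in `G` agree, Steiner `S`-trees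
of `T(v,G)` are Steiner `S`-trees of `G`, and the two `k`-eccentricities of `v` coincide. -/

open SimpleGraph

variable {V : Type*}

/-- `x` is a cut vertex of `H`: removing `x` leaves two vertices with no path
between them (i.e. disconnects `H`). -/
def IsCutVertex {W : Type*} (H : SimpleGraph W) (x : W) : Prop :=
  ¬ (H.induce {y : W | y ≠ x}).Preconnected

/-- A block of `G`: a maximal connected subgraph of `G` with no cut vertex. -/
def IsBlock (G : SimpleGraph V) (B : G.Subgraph) : Prop :=
  B.Connected ∧ (∀ x : B.verts, ¬ IsCutVertex B.coe x) ∧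
    ∀ B' : G.Subgraph, B ≤ B' → B'.Connected →
      (∀ x : B'.verts, ¬ IsCutVertex B'.coe x) → B' = B

/-- A block graph: every block is a clique. -/
def IsBlockGraph (G : SimpleGraph V) : Prop :=
  ∀ B : G.Subgraph, IsBlock G B → G.IsClique B.verts

/-- `x` is a vertex of the block `B` at minimum distance from `v` in `G`. -/
def IsNearest (G : SimpleGraph V) (v : V) (B : G.Subgraph) (x : V) : Prop :=
  x ∈ B.verts ∧ ∀ w ∈ B.verts, G.dist v x ≤ G.dist v w

/-- `T` is the graph `T(v,G)`: obtained from `G` by deleting, from every block `B`,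
each edge of `B` not incident with the nearest vertex of `B` to `v`. -/
def IsTvG (G T : SimpleGraph V) (v : V) : Prop :=
  ∀ a b : V, T.Adj a b ↔ (G.Adj a b ∧
    ∀ B : G.Subgraph, IsBlock G B → B.Adj a b →
      (IsNearest G v B a ∨ IsNearest G v B b))

/-- A Steiner `S`-tree of `G`: a connected subgraph of `G` containing all vertices
of `S`, with the minimum number of edges among such subgraphs. -/
def IsSteinerTree (G : SimpleGraph V) (S : Set V) (T : G.Subgraph) : Prop :=
  T.Connected ∧ S ⊆ T.verts ∧
    ∀ T' : G.Subgraph, T'.Connected → S ⊆ T'.verts →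
      T.edgeSet.ncard ≤ T'.edgeSet.ncard

/-- The Steiner `k`-eccentricity of `v` in `G`: the maximum, over all `k`-subsets
`S` of `V(G)` with `v ∈ S`, of the number of edges of a Steiner `S`-tree. -/
noncomputable def steinerEcc (G : SimpleGraph V) (k : ℕ) (v : V) : ℕ :=
  sSup { n | ∃ S : Finset V, S.card = k ∧ v ∈ S ∧
    ∃ T : G.Subgraph, IsSteinerTree G ↑S T ∧ T.edgeSet.ncard = n }

/-- A Steiner `k`-ecc `v`-tree: a Steiner `S`-tree, for some `k`-set `S` containing
`v`, whose number of edges realizes the Steiner `k`-eccentricity of `v`. -/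
def IsSteinerKEccTree (G : SimpleGraph V) (k : ℕ) (v : V) (T₀ : G.Subgraph) : Prop :=
  ∃ S : Finset V, S.card = k ∧ v ∈ S ∧ IsSteinerTree G ↑S T₀ ∧
    T₀.edgeSet.ncard = steinerEcc G k v

/-- The Steiner distance of `S` in `G`. -/
noncomputable def steinerDist (G : SimpleGraph V) (S : Set V) : ℕ :=
  sInf { n | ∃ T : G.Subgraph, T.Connected ∧ S ⊆ T.verts ∧ T.edgeSet.ncard = n }

/-- A walk inside `W` avoiding `x` gives reachability in the subgraph induced by `W` with `x`
deleted. -/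
lemma reachable_of_walk {G : SimpleGraph V} {W : Set V} (x : W) {a b : V} (w : G.Walk a b)
    (hw : ∀ y ∈ w.support, y ∈ W ∧ y ≠ x) (ha : a ∈ W) (ha' : (⟨a, ha⟩ : W) ≠ x)
    (hb : b ∈ W) (hb' : (⟨b, hb⟩ : W) ≠ x) :
    (((⊤ : G.Subgraph).induce W).coe.induce {y | y ≠ x}).Reachable
      ⟨⟨a, ha⟩, ha'⟩ ⟨⟨b, hb⟩, hb'⟩ := by
  induction w with
  | nil => exact Reachable.refl _
  | @cons a c b h w ih =>
    have hc := hw c (by simp)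
    have hc' : (⟨c, hc.1⟩ : W) ≠ x := fun h => hc.2 (congrArg Subtype.val h)
    refine Reachable.trans (Adj.reachable (v := ⟨⟨c, hc.1⟩, hc'⟩) ?_)
      (ih (fun y hy => hw y (by simp [hy])) hc.1 hc' hb hb')
    exact ⟨ha, hc.1, h⟩

/-- A path with both ends adjacent to a vertex `p` outside it lies, together with `p`, in a block:
the path and `p` form a cycle (a single edge if `u = q`), which has no cut vertex. -/
lemma exists_isBlock_of_path [Finite V] {G : SimpleGraph V} {u q p : V} (R : G.Walk u q)
    (hR : R.IsPath) (hp : p ∉ R.support) (hu : G.Adj p u) (hq : G.Adj p q) :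
    ∃ B : G.Subgraph, IsBlock G B ∧ u ∈ B.verts ∧ q ∈ B.verts := by
  classical
  set W : Set V := insert p {y | y ∈ R.support} with hW
  set K : G.Subgraph := (⊤ : G.Subgraph).induce W with hK
  have key : ∀ x : W, (((⊤ : G.Subgraph).induce W).coe.induce {y | y ≠ x}).Preconnected := by
    intro x
    -- every vertex other than `x` is joined to the base point `o`, which is `u` if `x = p`
    -- and `p` otherwise
    by_cases hx : (x : V) = p
    · have hux : (⟨u, by simp [hW]⟩ : W) ≠ x := by
        rintro rfl; exact hp (hx ▸ R.start_mem_support)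
      have h1 : ∀ y : {y : W | y ≠ x}, (((⊤ : G.Subgraph).induce W).coe.induce
          {y | y ≠ x}).Reachable y ⟨⟨u, by simp [hW]⟩, hux⟩ := by
        rintro ⟨⟨y, hy⟩, hyx⟩
        have hyR : y ∈ R.support := by
          rcases hy with hy | hy
          · exact absurd (Subtype.ext (hy.trans hx.symm)) hyx
          · exact hy
        refine reachable_of_walk x (R.takeUntil y hyR).reverse ?_ hy hyx _ hux
        intro z hz
        have hz' : z ∈ R.support := R.support_takeUntil_subset_support hyR (by simpa using hz)
        exact ⟨Or.inr hz', fun h => hp (by rw [← hx, ← h]; exact hz')⟩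
      exact fun a b => (h1 a).trans (h1 b).symm
    · have hpx : (⟨p, by simp [hW]⟩ : W) ≠ x := by
        rintro rfl; exact hx rfl
      have h1 : ∀ y : {y : W | y ≠ x}, (((⊤ : G.Subgraph).induce W).coe.induce
          {y | y ≠ x}).Reachable y ⟨⟨p, by simp [hW]⟩, hpx⟩ := by
        rintro ⟨⟨y, hy⟩, hyx⟩
        rcases id hy with hy' | hyR
        · obtain rfl : y = p := hy'
          exact Reachable.refl _
        · replace hyR : y ∈ R.support := hyR
          have hyx' : y ≠ x := fun h => hyx (Subtype.ext h)
          -- on a path, `x` cannot lie both before and after `y`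
          by_cases hxt : (x : V) ∈ (R.takeUntil y hyR).support
          · have hxd : (x : V) ∉ (R.dropUntil y hyR).support := by
              intro hxd
              have hnd := hR.support_nodup
              rw [← R.take_spec hyR, Walk.support_append] at hnd
              have htail : (x : V) ∈ (R.dropUntil y hyR).support.tail := by
                rw [Walk.mem_support_iff] at hxd
                exact hxd.resolve_left (fun h => hyx' h.symm)
              exact (List.disjoint_of_nodup_append hnd) hxt htail
            refine reachable_of_walk x ((R.dropUntil y hyR).concat hq.symm) ?_ hy hyx _ hpx
            intro z hz
            rw [Walk.support_concat] at hz
            simp only [List.mem_append, List.mem_singleton] at hz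
            rcases hz with hz | rfl
            · exact ⟨Or.inr (R.support_dropUntil_subset_support hyR hz),
                fun h => hxd (h ▸ hz)⟩
            · exact ⟨Or.inl rfl, fun h => hx h.symm⟩
          · refine reachable_of_walk x
              ((R.takeUntil y hyR).reverse.concat hu.symm) ?_ hy hyx _ hpx
            intro z hz
            rw [Walk.support_concat] at hz
            simp only [List.mem_append, List.mem_singleton,
              Walk.support_reverse, List.mem_reverse] at hz
            rcases hz with hz | rfl
            · exact ⟨Or.inr (R.support_takeUntil_subset_support hyR hz),
                fun h => hxt (h ▸ hz)⟩
            · exact ⟨Or.inl rfl, fun h => hx h.symm⟩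
      exact fun a b => (h1 a).trans (h1 b).symm
  have hKc : K.Connected := by
    have hind : (G.induce W).Connected := by
      have h2 : W = {y | y ∈ (Walk.cons hu R).support} := by
        ext y; simp [hW]
      rw [h2]
      exact (Walk.cons hu R).connected_induce_support
    rw [induce_eq_coe_induce_top] at hind
    exact ⟨hind⟩
  obtain ⟨B, hKB, hB⟩ := Set.Finite.exists_le_maximal
    (s := {B : G.Subgraph | B.Connected ∧ ∀ x : B.verts, ¬ IsCutVertex B.coe x})
    (Set.toFinite _) (a := K) ⟨hKc, fun x h => h (key x)⟩
  exact ⟨B, ⟨hB.prop.1, hB.prop.2, fun B' h1 h2 h3 => (hB.eq_of_le ⟨h2, h3⟩ h1).symm⟩,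
    hKB.1 (Or.inr R.start_mem_support), hKB.1 (Or.inr R.end_mem_support)⟩

lemma dist_le_add_one {G : SimpleGraph V} (hG : G.Connected) (v : V) {a b : V}
    (h : G.Adj a b) : G.dist v b ≤ G.dist v a + 1 := by
  have := hG.dist_triangle (u := v) (v := a) (w := b)
  rwa [SimpleGraph.dist_eq_one_iff_adj.2 h] at this

lemma exists_parent {G : SimpleGraph V} (hG : G.Connected) {v u : V} (hu : u ≠ v) :
    ∃ p, G.Adj p u ∧ G.dist v u = G.dist v p + 1 := by
  obtain ⟨w, hw⟩ := hG.exists_walk_length_eq_dist u v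
  cases w with
  | nil => exact absurd rfl hu
  | @cons _ p _ h w =>
    refine ⟨p, h.symm, le_antisymm (dist_le_add_one hG v h.symm) ?_⟩
    have := SimpleGraph.dist_le w
    rw [Walk.length_cons] at hw
    rw [SimpleGraph.dist_comm, SimpleGraph.dist_comm (u := v) (v := u)]
    omega

/-- The edge joining a vertex to a neighbour closer to `v` survives in `T(v,G)`. -/
lemma adj_of_dist {G T : SimpleGraph V} (hG : G.Connected) (hBG : IsBlockGraph G) {v : V}
    (hT : IsTvG G T v) {u p : V} (h : G.Adj p u) (hd : G.dist v u = G.dist v p + 1) :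
    T.Adj p u := by
  refine (hT p u).2 ⟨h, fun B hB hBa => Or.inl ⟨hBa.fst_mem, fun w hw => ?_⟩⟩
  by_cases hwu : w = u
  · subst hwu; omega
  · -- `w` is adjacent to `u` because the block is a clique
    have := dist_le_add_one hG v (hBG B hB hw hBa.snd_mem hwu)
    omega

/-- The parent `p` of `u` separates `u` from `v`. -/
lemma parent_mem [Finite V] {G : SimpleGraph V} (hG : G.Connected) (hBG : IsBlockGraph G)
    {v u p : V} (h : G.Adj p u) (hd : G.dist v u = G.dist v p + 1)
    (H : G.Subgraph) (hH : H.Connected) (hv : v ∈ H.verts) (hu : u ∈ H.verts) :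
    p ∈ H.verts := by
  classical
  by_contra hp
  have hpv : p ≠ v := fun h => hp (h ▸ hv)
  obtain ⟨q, hqp, hdq⟩ := exists_parent hG hpv
  obtain ⟨w₁, h1⟩ : ∃ w₁ : G.Walk u v, p ∉ w₁.support := by
    obtain ⟨w₁⟩ := hH.coe.preconnected ⟨u, hu⟩ ⟨v, hv⟩
    refine ⟨w₁.map H.hom, fun hmem => ?_⟩
    have hmem' : p ∈ w₁.support.map H.hom :=
      (congrArg (p ∈ ·) (Walk.support_map H.hom w₁)).mp hmem
    obtain ⟨y, -, hy⟩ := List.mem_map.1 hmem'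
    exact hp (hy ▸ y.2)
  obtain ⟨w₂, hw₂⟩ := hG.exists_walk_length_eq_dist v q
  have h2 : p ∉ w₂.support := by
    intro hmem
    have h3 := SimpleGraph.dist_le (w₂.takeUntil p hmem)
    have h4 := w₂.length_takeUntil_le_length hmem
    omega
  set w : G.Walk u q := w₁.append w₂ with hw
  have h3 : p ∉ w.bypass.support := by
    intro hmem
    have := w.support_bypass_subset_support hmem
    rw [hw, Walk.mem_support_append_iff] at this
    exact this.elim h1 h2
  obtain ⟨B, hB, huB, hqB⟩ := exists_isBlock_of_path w.bypass w.bypass_isPath h3 h hqp.symm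
  have hqu : q ≠ u := by rintro rfl; omega
  have := dist_le_add_one hG v (hBG B hB hqB huB hqu)
  -- `d(v,u) ≤ d(v,q) + 1` contradicts `d(v,u) = d(v,q) + 2`
  omega

lemma ncard_verts_le [Finite V] {G : SimpleGraph V} (H : G.Subgraph) (hH : H.Connected) :
    H.verts.ncard ≤ H.edgeSet.ncard + 1 := by
  have h := hH.coe.card_vert_le_card_edgeSet_add_one
  rw [← H.image_coe_edgeSet_coe, Set.ncard_image_of_injective _
    (Sym2.map.injective Subtype.val_injective)]
  exact h

/-- A connected subgraph of `G` containing `v` can be replaced by a connected subgraph of `T(v,G)`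
on the same vertices without increasing the number of edges. -/
lemma exists_sub_T [Finite V] {G T : SimpleGraph V} (hG : G.Connected) (hBG : IsBlockGraph G)
    {v : V} (hT : IsTvG G T v) (H : G.Subgraph) (hH : H.Connected) (hv : v ∈ H.verts) :
    ∃ H' : T.Subgraph, H'.Connected ∧ H'.verts = H.verts ∧
      H'.edgeSet.ncard ≤ H.edgeSet.ncard := by
  classical
  have hpar : ∀ u, ∃ p, u ≠ v → G.Adj p u ∧ G.dist v u = G.dist v p + 1 := by
    intro u
    by_cases hu : u = v
    · exact ⟨u, fun h => absurd hu h⟩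
    · obtain ⟨p, hp⟩ := exists_parent hG hu
      exact ⟨p, fun _ => hp⟩
  choose par hpar using hpar
  have hmem : ∀ u ∈ H.verts, u ≠ v → par u ∈ H.verts := fun u hu huv =>
    parent_mem hG hBG (hpar u huv).1 (hpar u huv).2 H hH hv hu
  have hadj : ∀ u, u ≠ v → T.Adj (par u) u := fun u huv =>
    adj_of_dist hG hBG hT (hpar u huv).1 (hpar u huv).2
  let H' : T.Subgraph :=
    { verts := H.verts
      Adj := fun a b => (a ∈ H.verts ∧ a ≠ v ∧ b = par a) ∨ (b ∈ H.verts ∧ b ≠ v ∧ a = par b)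
      adj_sub := by
        rintro a b (⟨-, h, rfl⟩ | ⟨-, h, rfl⟩)
        · exact (hadj a h).symm
        · exact hadj b h
      edge_vert := by
        rintro a b (⟨ha, -, -⟩ | ⟨hb, h, rfl⟩)
        · exact ha
        · exact hmem b hb h
      symm := ⟨fun a b h => h.symm⟩ }
  have hreach : ∀ n, ∀ u (hu : u ∈ H.verts), G.dist v u = n →
      H'.coe.Reachable ⟨u, hu⟩ ⟨v, hv⟩ := by
    intro n
    induction n with
    | zero =>
      intro u hu h
      obtain rfl := (hG.dist_eq_zero_iff).1 h
      exact Reachable.refl _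
    | succ n ih =>
      intro u hu h
      have huv : u ≠ v := by rintro rfl; simp at h
      refine Reachable.trans (Adj.reachable (v := ⟨par u, hmem u hu huv⟩)
        (Or.inl ⟨hu, huv, rfl⟩)) (ih _ _ ?_)
      have := (hpar u huv).2
      omega
  refine ⟨H', ?_, rfl, ?_⟩
  · rw [Subgraph.connected_iff']
    have : Nonempty H'.verts := ⟨⟨v, hv⟩⟩
    exact ⟨fun a b => (hreach _ a.1 a.2 rfl).trans (hreach _ b.1 b.2 rfl).symm⟩
  · have hsub : H'.edgeSet ⊆ (fun u => s(u, par u)) '' (H.verts \ {v}) := by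
      intro e
      induction e using Sym2.ind with
      | _ a b =>
        rw [Subgraph.mem_edgeSet]
        rintro (⟨ha, h, rfl⟩ | ⟨hb, h, rfl⟩)
        · exact ⟨a, ⟨ha, h⟩, rfl⟩
        · exact ⟨b, ⟨hb, h⟩, Sym2.eq_swap⟩
    have h1 := (Set.ncard_le_ncard hsub (Set.toFinite _)).trans
      (Set.ncard_image_le (Set.toFinite _))
    have h2 := Set.ncard_sdiff_singleton_add_one hv (Set.toFinite _)
    have h3 := ncard_verts_le H hH
    omega

/-- A subgraph of `T`, regarded as a subgraph of a supergraph `G` with the same vertices and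
edges. -/
def liftSub {G T : SimpleGraph V} (hle : T ≤ G) (H : T.Subgraph) : G.Subgraph where
  verts := H.verts
  Adj := H.Adj
  adj_sub h := hle (H.adj_sub h)
  edge_vert h := H.edge_vert h
  symm := H.symm

lemma liftSub_edgeSet {G T : SimpleGraph V} (hle : T ≤ G) (H : T.Subgraph) :
    (liftSub hle H).edgeSet = H.edgeSet := by
  ext e
  induction e using Sym2.ind with
  | _ a b => rfl

lemma liftSub_connected {G T : SimpleGraph V} (hle : T ≤ G) (H : T.Subgraph)
    (h : H.Connected) : (liftSub hle H).Connected :=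
  ⟨h.coe⟩

lemma liftSub_isSteinerTree [Finite V] {G T : SimpleGraph V} (hG : G.Connected)
    (hBG : IsBlockGraph G) {v : V} (hT : IsTvG G T v) (hle : T ≤ G) {S : Set V} (hvS : v ∈ S)
    {T₀ : T.Subgraph} (h : IsSteinerTree T S T₀) : IsSteinerTree G S (liftSub hle T₀) := by
  refine ⟨liftSub_connected hle _ h.1, h.2.1, fun H hH hS => ?_⟩
  obtain ⟨H', h1, h2, h3⟩ := exists_sub_T hG hBG hT H hH (hS hvS)
  rw [liftSub_edgeSet]
  exact (h.2.2 H' h1 (h2 ▸ hS)).trans h3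

/-- A Steiner tree in `G` for a set containing `v` can be traded for one in `T(v,G)` of the same
size. -/
lemma exists_isSteinerTree_T [Finite V] {G T : SimpleGraph V} (hG : G.Connected)
    (hBG : IsBlockGraph G) {v : V} (hT : IsTvG G T v) (hle : T ≤ G) {S : Set V} (hvS : v ∈ S)
    {H : G.Subgraph} (h : IsSteinerTree G S H) :
    ∃ H' : T.Subgraph, IsSteinerTree T S H' ∧ H'.edgeSet.ncard = H.edgeSet.ncard := by
  obtain ⟨H', h1, h2, h3⟩ := exists_sub_T hG hBG hT H h.1 (h.2.1 hvS)
  have hlift : ∀ K : T.Subgraph, K.Connected → S ⊆ K.verts →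
      H.edgeSet.ncard ≤ K.edgeSet.ncard := fun K hK hS => by
    rw [← liftSub_edgeSet hle K]
    exact h.2.2 _ (liftSub_connected hle K hK) hS
  have hS : S ⊆ H'.verts := h2 ▸ h.2.1
  exact ⟨H', ⟨h1, hS, fun K hK hS => h3.trans (hlift K hK hS)⟩,
    le_antisymm h3 (hlift H' h1 hS)⟩

/-- Every Steiner `k`-ecc `v`-tree in `T(v,G)` is also a Steiner
`k`-ecc `v`-tree in `G`; in particular its number of edges equals `ecc_k(v,G)`. -/
theorem steiner_stmt_4 [Fintype V] (G : SimpleGraph V) (hG : G.Connected)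
    (hBG : IsBlockGraph G) (v : V) (T : SimpleGraph V) (hT : IsTvG G T v)
    (k : ℕ) (hk2 : 2 ≤ k) (hkn : k ≤ Fintype.card V)
    (T₀ : T.Subgraph) (h₀ : IsSteinerKEccTree T k v T₀) :
    ∃ T₀' : G.Subgraph, T₀'.verts = T₀.verts ∧
      (∀ a b : V, T₀'.Adj a b ↔ T₀.Adj a b) ∧
      IsSteinerKEccTree G k v T₀' ∧
      T₀'.edgeSet.ncard = steinerEcc G k v := by
  classical
  have hle : T ≤ G := fun a b h => ((hT a b).1 h).1
  have hecc : steinerEcc T k v = steinerEcc G k v := by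
    unfold steinerEcc
    congr 1
    ext n
    constructor
    · rintro ⟨S, hS, hv, H, hH, rfl⟩
      exact ⟨S, hS, hv, liftSub hle H,
        liftSub_isSteinerTree hG hBG hT hle (Finset.mem_coe.2 hv) hH,
        by rw [liftSub_edgeSet]⟩
    · rintro ⟨S, hS, hv, H, hH, rfl⟩
      obtain ⟨H', h1, h2⟩ := exists_isSteinerTree_T hG hBG hT hle (Finset.mem_coe.2 hv) hH
      exact ⟨S, hS, hv, H', h1, h2⟩
  obtain ⟨S, hS, hv, hst, hcard⟩ := h₀
  have hfin : (liftSub hle T₀).edgeSet.ncard = steinerEcc G k v := by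
    rw [liftSub_edgeSet, hcard, hecc]
  exact ⟨liftSub hle T₀, rfl, fun _ _ => Iff.rfl,
    ⟨S, hS, hv, liftSub_isSteinerTree hG hBG hT hle (Finset.mem_coe.2 hv) hst, hfin⟩, hfin⟩
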